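/- arXiv:2602.16797 — 5 statements merged into one kernel-verified Lean document; each statement's English description precedes it below -/
import Mathlib

section
/- Let A ∈ ℂ^{m×n} have full column rank and let S ∈ ℂ^{d×m} be a subspace embedding for A with distortion η ∈ [0,1). Let SA = UΣV* be an (economy-size) singular value decomposition of SA and define the preconditioner P := VΣ⁻¹ ∈ ℂ^{n×n}. Then every singular value σ of the matrix AP satisfies 1/(1+η) ≤ σ² ≤ 1/(1−η); equivalently, σ_min(AP)² ≥ 1/(1+η) and σ_max(AP)² ≤ 1/(1−η). -/
/-!
Full column rank of `A` and `η < 1` make `SA` injective, so all singular values `s i` of `SA` are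
nonzero and `SAP = UΣVᴴVΣ⁻¹ = U`, a matrix with orthonormal columns. The embedding inequalities at
`y = Pu` with `‖u‖ = 1` then read `(1-η)‖APu‖² ≤ 1 ≤ (1+η)‖APu‖²`. A squared singular value of `AP`
is the value of `‖APu‖²` at a unit eigenvector `u` of `(AP)ᴴAP`.
-/

open Matrix

/-- The linear action of a complex matrix on Euclidean space: `mulE A v = A v`. -/
noncomputable def mulE {m n : ℕ} (A : Matrix (Fin m) (Fin n) ℂ)
    (v : EuclideanSpace ℂ (Fin n)) : EuclideanSpace ℂ (Fin m) :=
  Matrix.toEuclideanLin A v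

/-- `S` is a subspace embedding for `A` with distortion `η`:
`(1-η)‖Ay‖² ≤ ‖SAy‖² ≤ (1+η)‖Ay‖²` for all `y`. -/
def IsSubspaceEmbedding {d m n : ℕ} (S : Matrix (Fin d) (Fin m) ℂ)
    (A : Matrix (Fin m) (Fin n) ℂ) (η : ℝ) : Prop :=
  ∀ y : EuclideanSpace ℂ (Fin n),
    (1 - η) * ‖mulE A y‖ ^ 2 ≤ ‖mulE (S * A) y‖ ^ 2 ∧
      ‖mulE (S * A) y‖ ^ 2 ≤ (1 + η) * ‖mulE A y‖ ^ 2

/-- `σ` lists the singular values of `A` in decreasing order: `σ` is antitone, nonnegative,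
and there is an orthonormal (eigen)basis `B` with `AᴴA (B i) = σᵢ² • B i`. -/
def HasSingularValues {m n : ℕ} (A : Matrix (Fin m) (Fin n) ℂ) (σ : Fin n → ℝ) : Prop :=
  Antitone σ ∧ (∀ i, 0 ≤ σ i) ∧
    ∃ B : Fin n → EuclideanSpace ℂ (Fin n), Orthonormal ℂ B ∧
      ∀ i, mulE (Aᴴ * A) (B i) = ((σ i ^ 2 : ℝ) : ℂ) • B i

/-- The spectral norm (largest singular value) of a matrix, as the operator norm of its
action between Euclidean spaces. -/
noncomputable def specNorm {m n : ℕ} (A : Matrix (Fin m) (Fin n) ℂ) : ℝ :=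
  ‖LinearMap.toContinuousLinearMap (Matrix.toEuclideanLin A)‖

section EmbedsRange

variable {R E F G : Type*} [Semiring R] [AddCommGroup E] [Module R E] [NormedAddCommGroup F]
  [Module R F] [NormedAddCommGroup G] [Module R G] {S : F →ₗ[R] G} {A : E →ₗ[R] F} {η : ℝ}

/-- `S` is a subspace embedding for the range of the linear map `A` with distortion `η`. This is
`IsSubspaceEmbedding` for linear maps in place of matrices. -/
def EmbedsRange (S : F →ₗ[R] G) (A : E →ₗ[R] F) (η : ℝ) : Prop :=
  ∀ y, (1 - η) * ‖A y‖ ^ 2 ≤ ‖S (A y)‖ ^ 2 ∧ ‖S (A y)‖ ^ 2 ≤ (1 + η) * ‖A y‖ ^ 2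

theorem EmbedsRange.apply_eq_zero (hS : EmbedsRange S A η) (hη : η < 1) {y : E}
    (hy : S (A y) = 0) : A y = 0 := by
  have h : (1 - η) * ‖A y‖ ^ 2 ≤ 0 := by simpa [hy] using (hS y).1
  have hsq : ‖A y‖ ^ 2 ≤ 0 := nonpos_of_mul_nonpos_right h (sub_pos.2 hη)
  simpa using hsq.antisymm (sq_nonneg _)

theorem EmbedsRange.injective_comp (hS : EmbedsRange S A η) (hη : η < 1)
    (hA : Function.Injective A) : Function.Injective (S ∘ₗ A) :=
  (injective_iff_map_eq_zero _).2 fun _ hy ↦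
    (map_eq_zero_iff A hA).1 (hS.apply_eq_zero hη hy)

theorem EmbedsRange.norm_sq_mem_Icc (hS : EmbedsRange S A η) (hη : η < 1) {y : E}
    (hy : ‖S (A y)‖ = 1) : ‖A y‖ ^ 2 ∈ Set.Icc (1 / (1 + η)) (1 / (1 - η)) := by
  obtain ⟨hlower, hupper⟩ := hS y
  rw [hy, one_pow] at hlower hupper
  have hη' : 0 < 1 + η := pos_of_mul_pos_left (one_pos.trans_le hupper) (sq_nonneg _)
  exact ⟨(div_le_iff₀' hη').2 hupper, (le_div_iff₀' (sub_pos.2 hη)).2 hlower⟩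

end EmbedsRange

section Gram

variable {𝕜 E F : Type*} [RCLike 𝕜] [NormedAddCommGroup E] [InnerProductSpace 𝕜 E]
  [FiniteDimensional 𝕜 E] [NormedAddCommGroup F] [InnerProductSpace 𝕜 F] [FiniteDimensional 𝕜 F]
  {T : E →ₗ[𝕜] F} {c : ℝ}

theorem norm_sq_apply_of_adjoint_apply_eq_smul {v : E}
    (h : T.adjoint (T v) = (c : 𝕜) • v) : ‖T v‖ ^ 2 = c * ‖v‖ ^ 2 := by
  refine RCLike.ofReal_injective (K := 𝕜) ?_
  calc ((‖T v‖ ^ 2 : ℝ) : 𝕜) = inner 𝕜 v (T.adjoint (T v)) := by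
        rw [LinearMap.adjoint_inner_right, inner_self_eq_norm_sq_to_K, RCLike.ofReal_pow]
    _ = ((c * ‖v‖ ^ 2 : ℝ) : 𝕜) := by
        rw [h, inner_smul_right, inner_self_eq_norm_sq_to_K, RCLike.ofReal_mul, RCLike.ofReal_pow]

theorem exists_norm_eq_one_of_hasEigenvalue_adjoint_comp_self
    (hc : Module.End.HasEigenvalue (T.adjoint ∘ₗ T) (c : 𝕜)) : ∃ u, ‖u‖ = 1 ∧ ‖T u‖ ^ 2 = c := by
  obtain ⟨v, hv⟩ := hc.exists_hasEigenvector
  let u : E := (‖v‖⁻¹ : 𝕜) • v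
  have hu : ‖u‖ = 1 := norm_smul_inv_norm hv.2
  have hTu : T.adjoint (T u) = (c : 𝕜) • u := by
    rw [map_smul, map_smul, ← LinearMap.comp_apply, hv.apply_eq_smul, smul_comm]
  exact ⟨u, hu, by simpa [hu] using norm_sq_apply_of_adjoint_apply_eq_smul hTu⟩

variable {m n : Type*} [Fintype m] [Fintype n] [DecidableEq n]

theorem toEuclideanLin_conjTranspose_mul_self (M : Matrix m n 𝕜) :
    toEuclideanLin (Mᴴ * M) = (toEuclideanLin M).adjoint ∘ₗ toEuclideanLin M := by
  classical
  rw [← toEuclideanLin_conjTranspose_eq_adjoint, toLpLin_mul_same]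

theorem norm_toEuclideanLin_of_conjTranspose_mul_self {M : Matrix m n 𝕜} (hM : Mᴴ * M = 1)
    (v : EuclideanSpace 𝕜 n) : ‖toEuclideanLin M v‖ = ‖v‖ := by
  have h : (toEuclideanLin M).adjoint (toEuclideanLin M v) = ((1 : ℝ) : 𝕜) • v := by
    simp [← LinearMap.comp_apply, ← toEuclideanLin_conjTranspose_mul_self, hM]
  simpa using norm_sq_apply_of_adjoint_apply_eq_smul h

end Gram

theorem mulVec_injective_of_toLpLin_injective {m n R : Type*} [Fintype n] [DecidableEq n]
    [CommRing R] {p q : ENNReal} {M : Matrix m n R} (hM : Function.Injective (toLpLin p q M)) :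
    Function.Injective M.mulVec :=
  fun _ _ h ↦ WithLp.toLp_injective p (hM (congrArg (WithLp.toLp q) h))

section DiagonalFactorization

variable {d n k : Type*} [Fintype n] [Fintype k] [DecidableEq k]

theorem ne_zero_of_mulVec_injective_of_eq_mul_diagonal_mul {R : Type*} [Semiring R] [Nontrivial R]
    {M : Matrix d n R} {U : Matrix d k R} {s : k → R} {V : Matrix n k R} {W : Matrix k n R}
    (hM : M = U * diagonal s * W) (hWV : W * V = 1) (hinj : Function.Injective M.mulVec) (i : k) :
    s i ≠ 0 := by
  intro hi
  have hV : V *ᵥ Pi.single i 1 = 0 := hinj <| calc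
    M *ᵥ V *ᵥ Pi.single i 1 = U *ᵥ diagonal s *ᵥ Pi.single i 1 := by
      rw [mulVec_mulVec, hM, Matrix.mul_assoc, hWV, Matrix.mul_one, mulVec_mulVec]
    _ = M *ᵥ 0 := by simp [hi]
  have hsingle : (Pi.single i 1 : k → R) = 0 := by
    rw [← one_mulVec (Pi.single i 1), ← hWV, ← mulVec_mulVec, hV, mulVec_zero]
  exact one_ne_zero (Pi.single_eq_zero_iff.1 hsingle)

theorem mul_mul_diagonal_inv_of_eq_mul_diagonal_mul {K : Type*} [DivisionSemiring K]
    {M : Matrix d n K} {U : Matrix d k K} {s : k → K} {V : Matrix n k K} {W : Matrix k n K}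
    (hM : M = U * diagonal s * W) (hWV : W * V = 1) (hs : ∀ i, s i ≠ 0) :
    M * (V * diagonal fun i ↦ (s i)⁻¹) = U := by
  have hdiag : diagonal s * diagonal (fun i ↦ (s i)⁻¹) = 1 := by
    simp [diagonal_mul_diagonal, hs]
  calc M * (V * diagonal fun i ↦ (s i)⁻¹)
      = U * (diagonal s * (W * V * diagonal fun i ↦ (s i)⁻¹)) := by
        simp only [hM, Matrix.mul_assoc]
    _ = U := by rw [hWV, Matrix.one_mul, hdiag, Matrix.mul_one]

end DiagonalFactorization

theorem randomized_preconditioning_general {𝕜 d m n k : Type*} [RCLike 𝕜] [Fintype d]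
    [Fintype m] [DecidableEq m] [Fintype n] [DecidableEq n] [Fintype k] [DecidableEq k]
    (A : Matrix m n 𝕜) (S : Matrix d m 𝕜) {η : ℝ} (hη : η < 1)
    (hS : EmbedsRange (toEuclideanLin S) (toEuclideanLin A) η)
    (U : Matrix d k 𝕜) (V : Matrix n k 𝕜) (s : k → 𝕜) (hs : ∀ i, s i ≠ 0)
    (hU : Uᴴ * U = 1) (hV : Vᴴ * V = 1) (hSVD : S * A = U * diagonal s * Vᴴ)
    (P : Matrix n k 𝕜) (hP : P = V * diagonal fun i ↦ (s i)⁻¹) :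
    (∀ c : ℝ, Module.End.HasEigenvalue (toEuclideanLin ((A * P)ᴴ * (A * P))) (c : 𝕜) →
      1 / (1 + η) ≤ c ∧ c ≤ 1 / (1 - η)) ∧
    (∀ u : EuclideanSpace 𝕜 k, ‖u‖ = 1 →
      1 / (1 + η) ≤ ‖toEuclideanLin (A * P) u‖ ^ 2 ∧
        ‖toEuclideanLin (A * P) u‖ ^ 2 ≤ 1 / (1 - η)) := by
  have hSAP : S * A * P = U := hP ▸ mul_mul_diagonal_inv_of_eq_mul_diagonal_mul hSVD hV hs
  have hRayleigh (u : EuclideanSpace 𝕜 k) (hu : ‖u‖ = 1) :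
      ‖toEuclideanLin (A * P) u‖ ^ 2 ∈ Set.Icc (1 / (1 + η)) (1 / (1 - η)) := by
    have hnorm : ‖toEuclideanLin S (toEuclideanLin A (toEuclideanLin P u))‖ = 1 := by
      rw [← hu, ← norm_toEuclideanLin_of_conjTranspose_mul_self hU u, ← hSAP]
      simp
    simpa using hS.norm_sq_mem_Icc hη hnorm
  refine ⟨fun c hc ↦ ?_, hRayleigh⟩
  rw [toEuclideanLin_conjTranspose_mul_self] at hc
  obtain ⟨u, hu, rfl⟩ := exists_norm_eq_one_of_hasEigenvalue_adjoint_comp_self hc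
  exact hRayleigh u hu

theorem HasSingularValues.hasEigenvalue {m n : ℕ} {A : Matrix (Fin m) (Fin n) ℂ} {σ : Fin n → ℝ}
    (hσ : HasSingularValues A σ) (i : Fin n) :
    Module.End.HasEigenvalue (toEuclideanLin (Aᴴ * A)) ((σ i ^ 2 : ℝ) : ℂ) := by
  obtain ⟨-, -, B, hB, hEigen⟩ := hσ
  exact Module.End.hasEigenvalue_of_hasEigenvector
    ⟨Module.End.mem_eigenspace_iff.2 (hEigen i), hB.ne_zero i⟩

theorem IsSubspaceEmbedding.embedsRange {d m n : ℕ} {S : Matrix (Fin d) (Fin m) ℂ}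
    {A : Matrix (Fin m) (Fin n) ℂ} {η : ℝ} (hS : IsSubspaceEmbedding S A η) :
    EmbedsRange (toEuclideanLin S) (toEuclideanLin A) η := by
  simpa [IsSubspaceEmbedding, EmbedsRange, mulE] using hS

/-- Randomized preconditioning, Fact 3.1 / Rokhlin–Tygert:
if `S` is a subspace embedding for the full-column-rank matrix `A` with distortion
`η ∈ [0,1)`, `SA = UΣVᴴ` is an (economy) SVD, and `P := VΣ⁻¹`, then every singular value
`σ` of `AP` satisfies `1/(1+η) ≤ σ² ≤ 1/(1−η)`; equivalently the Rayleigh quotient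
`‖APu‖²` lies in `[1/(1+η), 1/(1−η)]` for every unit vector `u`. -/
theorem randomized_preconditioning
    {d m n : ℕ} (A : Matrix (Fin m) (Fin n) ℂ)
    (hrank : Function.Injective (mulE A))
    (S : Matrix (Fin d) (Fin m) ℂ) (η : ℝ) (hη0 : 0 ≤ η) (hη1 : η < 1)
    (hS : IsSubspaceEmbedding S A η)
    (U : Matrix (Fin d) (Fin n) ℂ) (V : Matrix (Fin n) (Fin n) ℂ) (s : Fin n → ℝ)
    (hU : Uᴴ * U = 1) (hV : Vᴴ * V = 1) (hs0 : ∀ i, 0 ≤ s i)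
    (hSVD : S * A = U * Matrix.diagonal (fun i => (s i : ℂ)) * Vᴴ)
    (P : Matrix (Fin n) (Fin n) ℂ)
    (hP : P = V * Matrix.diagonal (fun i => ((s i : ℂ))⁻¹)) :
    (∀ σAP : Fin n → ℝ, HasSingularValues (A * P) σAP →
      ∀ i, 1 / (1 + η) ≤ σAP i ^ 2 ∧ σAP i ^ 2 ≤ 1 / (1 - η)) ∧
    (∀ u : EuclideanSpace ℂ (Fin n), ‖u‖ = 1 →
      1 / (1 + η) ≤ ‖mulE (A * P) u‖ ^ 2 ∧ ‖mulE (A * P) u‖ ^ 2 ≤ 1 / (1 - η)) := by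
  have hSA : Function.Injective (S * A).mulVec :=
    mulVec_injective_of_toLpLin_injective (p := 2) (q := 2) <| by
      simpa only [toLpLin_mul_same] using hS.embedsRange.injective_comp hη1 hrank
  have hs := ne_zero_of_mulVec_injective_of_eq_mul_diagonal_mul hSVD hV hSA
  obtain ⟨hEigenvalue, hRayleigh⟩ :=
    randomized_preconditioning_general A S hη1 hS.embedsRange U V _ hs hU hV hSVD P hP
  exact ⟨fun σ hσ i ↦ hEigenvalue _ (hσ.hasEigenvalue i), hRayleigh⟩
end

section
/- Let A ∈ ℂ^{m×n} and let S ∈ ℂ^{d×m} be a subspace embedding for A with distortion η ∈ [0,1). Then for every index i ∈ {1,…,n}, the i-th largest singular value of SA approximates the i-th largest singular value of A in the sense that (1−η)·σ_i(A)² ≤ σ_i(SA)² ≤ (1+η)·σ_i(A)². In particular, (1−η)‖A‖² ≤ ‖SA‖² ≤ (1+η)‖A‖², where ‖·‖ denotes the spectral norm. -/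
open Matrix

/-!
Courant–Fischer: if `b` and `c` are orthonormal bases of right singular vectors of `T` and `U`, the
`n - 1` conditions `x ⊥ b j` for `j > i` and `x ⊥ c j` for `j < i` have a common solution `x ≠ 0`,
and it satisfies `σᵢ(T)² ‖x‖² ≤ ‖T x‖²` and `‖U x‖² ≤ σᵢ(U)² ‖x‖²`. Hence an inequality
`p ‖T x‖² ≤ q ‖U x‖²` between quadratic forms passes to `p σᵢ(T)² ≤ q σᵢ(U)²`. Taking `T = U` shows
that the singular values do not depend on the basis.
-/

open Module LinearMap
open scoped InnerProductSpace

section OperatorNorm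

variable {𝕜 E F G : Type*} [NontriviallyNormedField 𝕜] [SeminormedAddCommGroup E]
  [NormedSpace 𝕜 E] [SeminormedAddCommGroup F] [NormedSpace 𝕜 F] [SeminormedAddCommGroup G]
  [NormedSpace 𝕜 G] {T : E →L[𝕜] F} {U : E →L[𝕜] G} {p q : ℝ}

lemma mul_opNorm_le_mul_opNorm (hp : 0 ≤ p) (hq : 0 ≤ q) (h : ∀ x, p * ‖T x‖ ≤ q * ‖U x‖) :
    p * ‖T‖ ≤ q * ‖U‖ := by
  rcases hp.eq_or_lt with rfl | hp
  · rw [zero_mul]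
    positivity
  rw [← le_div_iff₀' hp]
  refine T.opNorm_le_bound (by positivity) fun x => ?_
  rw [div_mul_eq_mul_div, le_div_iff₀' hp]
  calc p * ‖T x‖ ≤ q * ‖U x‖ := h x
    _ ≤ q * (‖U‖ * ‖x‖) := by gcongr; exact U.le_opNorm x
    _ = q * ‖U‖ * ‖x‖ := (mul_assoc ..).symm

lemma mul_sq_opNorm_le_mul_sq_opNorm (hp : 0 ≤ p) (hq : 0 ≤ q)
    (h : ∀ x, p * ‖T x‖ ^ 2 ≤ q * ‖U x‖ ^ 2) : p * ‖T‖ ^ 2 ≤ q * ‖U‖ ^ 2 := by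
  have sqrt_mul_le_iff {s t : ℝ} (hs : 0 ≤ s) (ht : 0 ≤ t) :
      √p * s ≤ √q * t ↔ p * s ^ 2 ≤ q * t ^ 2 := by
    rw [← sq_le_sq₀ (by positivity) (by positivity), mul_pow, mul_pow, Real.sq_sqrt hp,
      Real.sq_sqrt hq]
  rw [← sqrt_mul_le_iff (norm_nonneg T) (norm_nonneg U)]
  exact mul_opNorm_le_mul_opNorm p.sqrt_nonneg q.sqrt_nonneg fun x =>
    (sqrt_mul_le_iff (norm_nonneg _) (norm_nonneg _)).2 (h x)

end OperatorNorm

section Orthogonality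

variable {𝕜 E : Type*} [RCLike 𝕜] [NormedAddCommGroup E] [InnerProductSpace 𝕜 E]

lemma exists_ne_zero_forall_inner_eq_zero {s : Finset E} (hs : s.card < finrank 𝕜 E) :
    ∃ x : E, x ≠ 0 ∧ ∀ v ∈ s, ⟪v, x⟫_𝕜 = 0 := by
  have hspan : Submodule.span 𝕜 (s : Set E) ≠ ⊤ := fun htop => by
    have hle := finrank_span_finset_le_card (R := 𝕜) s
    rw [Set.finrank, htop, finrank_top] at hle
    exact hle.not_gt hs
  obtain ⟨x, hx, hx0⟩ :=
    Submodule.exists_mem_ne_zero_of_ne_bot (mt Submodule.orthogonal_eq_bot_iff.1 hspan)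
  exact ⟨x, hx0, fun v hv => hx v (Submodule.subset_span hv)⟩

lemma exists_ne_zero_inner_eq_zero_of_lt_of_gt {n : ℕ} (hn : n ≤ finrank 𝕜 E) (b c : Fin n → E)
    (i : Fin n) :
    ∃ x : E, x ≠ 0 ∧ (∀ j, i < j → ⟪b j, x⟫_𝕜 = 0) ∧ ∀ j, j < i → ⟪c j, x⟫_𝕜 = 0 := by
  classical
  have hcard : ((Finset.Ioi i).image b ∪ (Finset.Iio i).image c).card < finrank 𝕜 E := by
    calc ((Finset.Ioi i).image b ∪ (Finset.Iio i).image c).card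
        ≤ (Finset.Ioi i).card + (Finset.Iio i).card :=
          (Finset.card_union_le _ _).trans (add_le_add Finset.card_image_le Finset.card_image_le)
      _ < n := by rw [Fin.card_Ioi, Fin.card_Iio]; omega
      _ ≤ finrank 𝕜 E := hn
  obtain ⟨x, hx0, hx⟩ := exists_ne_zero_forall_inner_eq_zero hcard
  refine ⟨x, hx0, fun j hj => hx _ ?_, fun j hj => hx _ ?_⟩
  · exact Finset.mem_union_left _ (Finset.mem_image_of_mem b (Finset.mem_Ioi.2 hj))
  · exact Finset.mem_union_right _ (Finset.mem_image_of_mem c (Finset.mem_Iio.2 hj))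

end Orthogonality

section SingularValues

variable {𝕜 E F G : Type*} [RCLike 𝕜]
  [NormedAddCommGroup E] [InnerProductSpace 𝕜 E] [FiniteDimensional 𝕜 E]
  [NormedAddCommGroup F] [InnerProductSpace 𝕜 F] [FiniteDimensional 𝕜 F]
  [NormedAddCommGroup G] [InnerProductSpace 𝕜 G] [FiniteDimensional 𝕜 G]
  {T : E →ₗ[𝕜] F} {U : E →ₗ[𝕜] G} {n : ℕ} {b c : OrthonormalBasis (Fin n) 𝕜 E}
  {σ τ : Fin n → ℝ} {p q : ℝ}

/-- `b` is an orthonormal basis of right singular vectors of `T`, and `σ` lists the corresponding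
singular values in decreasing order. It is used to compare singular values computed in different
bases. Right singular vectors are encoded as eigenvectors of `T† T`, so that the basis includes
kernel vectors (with singular value `0`) and no left singular vectors have to be chosen. -/
structure IsRightSingularBasis (T : E →ₗ[𝕜] F) (b : OrthonormalBasis (Fin n) 𝕜 E)
    (σ : Fin n → ℝ) : Prop where
  antitone : Antitone σ
  nonneg : ∀ i, 0 ≤ σ i
  adjoint_apply_apply : ∀ i, adjoint T (T (b i)) = ((σ i ^ 2 : ℝ) : 𝕜) • b i

lemma isRightSingularBasis_eigenvectorBasis (T : E →ₗ[𝕜] F) (hn : finrank 𝕜 E = n) :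
    IsRightSingularBasis T (T.isSymmetric_adjoint_comp_self.eigenvectorBasis hn)
      (fun i => T.singularValues i) where
  antitone _ _ hij := T.singularValues_antitone hij
  nonneg i := T.singularValues_nonneg i
  adjoint_apply_apply i := by
    rw [T.sq_singularValues_fin hn i]
    exact T.isSymmetric_adjoint_comp_self.apply_eigenvectorBasis hn i

namespace IsRightSingularBasis

lemma inner_apply_apply (hT : IsRightSingularBasis T b σ) (i : Fin n) (x : E) :
    ⟪T (b i), T x⟫_𝕜 = ((σ i ^ 2 : ℝ) : 𝕜) * ⟪b i, x⟫_𝕜 := by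
  rw [← adjoint_inner_left, hT.adjoint_apply_apply, inner_smul_left, RCLike.conj_ofReal]

lemma sq_norm_apply_eq_sum (hT : IsRightSingularBasis T b σ) (x : E) :
    ‖T x‖ ^ 2 = ∑ j, σ j ^ 2 * ‖⟪b j, x⟫_𝕜‖ ^ 2 := by
  have hinner : ⟪T x, T x⟫_𝕜 = ∑ j, ((σ j ^ 2 * ‖⟪b j, x⟫_𝕜‖ ^ 2 : ℝ) : 𝕜) := by
    calc ⟪T x, T x⟫_𝕜 = ∑ j, ⟪x, b j⟫_𝕜 * ⟪b j, adjoint T (T x)⟫_𝕜 := by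
          rw [b.sum_inner_mul_inner, adjoint_inner_right]
      _ = ∑ j, ((σ j ^ 2 * ‖⟪b j, x⟫_𝕜‖ ^ 2 : ℝ) : 𝕜) := by
          refine Finset.sum_congr rfl fun j _ => ?_
          rw [adjoint_inner_right, hT.inner_apply_apply, mul_left_comm, ← inner_conj_symm x (b j),
            RCLike.conj_mul]
          push_cast
          rfl
  rw [inner_self_eq_norm_sq_to_K] at hinner
  exact_mod_cast hinner

lemma sq_mul_sq_norm_le (hT : IsRightSingularBasis T b σ) {i : Fin n} {x : E}
    (hx : ∀ j, i < j → ⟪b j, x⟫_𝕜 = 0) : σ i ^ 2 * ‖x‖ ^ 2 ≤ ‖T x‖ ^ 2 := by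
  rw [hT.sq_norm_apply_eq_sum, ← b.sum_sq_norm_inner_right x, Finset.mul_sum]
  refine Finset.sum_le_sum fun j _ => ?_
  rcases lt_or_ge i j with hij | hji
  · simp [hx j hij]
  · gcongr
    exacts [hT.nonneg i, hT.antitone hji]

lemma sq_norm_le_sq_mul (hT : IsRightSingularBasis T b σ) {i : Fin n} {x : E}
    (hx : ∀ j, j < i → ⟪b j, x⟫_𝕜 = 0) : ‖T x‖ ^ 2 ≤ σ i ^ 2 * ‖x‖ ^ 2 := by
  rw [hT.sq_norm_apply_eq_sum, ← b.sum_sq_norm_inner_right x, Finset.mul_sum]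
  refine Finset.sum_le_sum fun j _ => ?_
  rcases lt_or_ge j i with hji | hij
  · simp [hx j hji]
  · gcongr
    exacts [hT.nonneg j, hT.antitone hij]

lemma mul_sq_le_mul_sq (hT : IsRightSingularBasis T b σ) (hU : IsRightSingularBasis U c τ)
    (hp : 0 ≤ p) (hq : 0 ≤ q) (h : ∀ x, p * ‖T x‖ ^ 2 ≤ q * ‖U x‖ ^ 2) (i : Fin n) :
    p * σ i ^ 2 ≤ q * τ i ^ 2 := by
  have hn : n = finrank 𝕜 E := by rw [finrank_eq_card_basis b.toBasis, Fintype.card_fin]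
  obtain ⟨x, hx0, hxb, hxc⟩ := exists_ne_zero_inner_eq_zero_of_lt_of_gt hn.le b c i
  have hx : 0 < ‖x‖ ^ 2 := by positivity
  refine le_of_mul_le_mul_right ?_ hx
  calc p * σ i ^ 2 * ‖x‖ ^ 2 = p * (σ i ^ 2 * ‖x‖ ^ 2) := mul_assoc ..
    _ ≤ p * ‖T x‖ ^ 2 := by gcongr; exact hT.sq_mul_sq_norm_le hxb
    _ ≤ q * ‖U x‖ ^ 2 := h x
    _ ≤ q * (τ i ^ 2 * ‖x‖ ^ 2) := by gcongr; exact hU.sq_norm_le_sq_mul hxc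
    _ = q * τ i ^ 2 * ‖x‖ ^ 2 := (mul_assoc ..).symm

lemma unique (hb : IsRightSingularBasis T b σ)
    (hc : IsRightSingularBasis T c τ) : σ = τ := by
  funext i
  rw [← sq_eq_sq₀ (hb.nonneg i) (hc.nonneg i), ← one_mul (σ i ^ 2), ← one_mul (τ i ^ 2)]
  exact le_antisymm (hb.mul_sq_le_mul_sq hc zero_le_one zero_le_one (fun _ => le_rfl) i)
    (hc.mul_sq_le_mul_sq hb zero_le_one zero_le_one (fun _ => le_rfl) i)

end IsRightSingularBasis

lemma mul_sq_singularValues_le_mul_sq_singularValues (hp : 0 ≤ p) (hq : 0 ≤ q)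
    (h : ∀ x, p * ‖T x‖ ^ 2 ≤ q * ‖U x‖ ^ 2) (i : ℕ) :
    p * T.singularValues i ^ 2 ≤ q * U.singularValues i ^ 2 := by
  rcases lt_or_ge i (finrank 𝕜 E) with hi | hi
  · exact (isRightSingularBasis_eigenvectorBasis T rfl).mul_sq_le_mul_sq
      (isRightSingularBasis_eigenvectorBasis U rfl) hp hq h ⟨i, hi⟩
  · simp [singularValues_of_finrank_le _ hi]

theorem embedding_preserves_singular_values_general (hp : 0 ≤ p) (hq : 0 ≤ q)
    (h : ∀ x, p * ‖T x‖ ^ 2 ≤ ‖U x‖ ^ 2 ∧ ‖U x‖ ^ 2 ≤ q * ‖T x‖ ^ 2) :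
    (∀ i, p * T.singularValues i ^ 2 ≤ U.singularValues i ^ 2 ∧
        U.singularValues i ^ 2 ≤ q * T.singularValues i ^ 2) ∧
      p * ‖T.toContinuousLinearMap‖ ^ 2 ≤ ‖U.toContinuousLinearMap‖ ^ 2 ∧
        ‖U.toContinuousLinearMap‖ ^ 2 ≤ q * ‖T.toContinuousLinearMap‖ ^ 2 := by
  have hlow : ∀ x, p * ‖T x‖ ^ 2 ≤ 1 * ‖U x‖ ^ 2 := fun x => by simpa only [one_mul] using (h x).1
  have hupp : ∀ x, 1 * ‖U x‖ ^ 2 ≤ q * ‖T x‖ ^ 2 := fun x => by simpa only [one_mul] using (h x).2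
  refine ⟨fun i => ⟨?_, ?_⟩, ?_, ?_⟩
  · simpa only [one_mul] using mul_sq_singularValues_le_mul_sq_singularValues hp zero_le_one hlow i
  · simpa only [one_mul] using mul_sq_singularValues_le_mul_sq_singularValues zero_le_one hq hupp i
  · simpa only [one_mul] using mul_sq_opNorm_le_mul_sq_opNorm hp zero_le_one hlow
  · simpa only [one_mul] using mul_sq_opNorm_le_mul_sq_opNorm zero_le_one hq hupp

end SingularValues

section Matrix

variable {m n : ℕ} {A : Matrix (Fin m) (Fin n) ℂ} {σ : Fin n → ℝ}

lemma mulE_conjTranspose_mul_self (A : Matrix (Fin m) (Fin n) ℂ) (x : EuclideanSpace ℂ (Fin n)) :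
    mulE (Aᴴ * A) x = adjoint (toEuclideanLin A) (toEuclideanLin A x) := by
  rw [← toEuclideanLin_conjTranspose_eq_adjoint, mulE, toEuclideanLin, toLpLin_mul_same]
  rfl

lemma HasSingularValues.exists_isRightSingularBasis (h : HasSingularValues A σ) :
    ∃ b, IsRightSingularBasis (toEuclideanLin A) b σ := by
  obtain ⟨hanti, hnonneg, B, hB, hBσ⟩ := h
  have hspan : Submodule.span ℂ (Set.range B) = ⊤ :=
    hB.linearIndependent.span_eq_top_of_card_eq_finrank' (by simp)
  refine ⟨OrthonormalBasis.mk hB hspan.ge, hanti, hnonneg, fun i => ?_⟩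
  rw [OrthonormalBasis.coe_mk, ← mulE_conjTranspose_mul_self, hBσ]
  rfl

lemma HasSingularValues.eq_singularValues (h : HasSingularValues A σ) :
    σ = fun i : Fin n => (toEuclideanLin A).singularValues i := by
  obtain ⟨b, hb⟩ := h.exists_isRightSingularBasis
  exact hb.unique (isRightSingularBasis_eigenvectorBasis _ finrank_euclideanSpace_fin)

end Matrix

/-- a subspace embedding `S` for `A` with distortion `η ∈ [0,1)` preserves all
singular values: `(1−η)·σᵢ(A)² ≤ σᵢ(SA)² ≤ (1+η)·σᵢ(A)²` for each `i`, and in particular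
`(1−η)‖A‖² ≤ ‖SA‖² ≤ (1+η)‖A‖²` in the spectral norm. -/
theorem embedding_preserves_singular_values
    {d m n : ℕ} (A : Matrix (Fin m) (Fin n) ℂ)
    (S : Matrix (Fin d) (Fin m) ℂ) (η : ℝ) (hη0 : 0 ≤ η) (hη1 : η < 1)
    (hS : IsSubspaceEmbedding S A η)
    (σA σSA : Fin n → ℝ)
    (hσA : HasSingularValues A σA) (hσSA : HasSingularValues (S * A) σSA) :
    (∀ i : Fin n, (1 - η) * σA i ^ 2 ≤ σSA i ^ 2 ∧ σSA i ^ 2 ≤ (1 + η) * σA i ^ 2) ∧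
      ((1 - η) * specNorm A ^ 2 ≤ specNorm (S * A) ^ 2 ∧
        specNorm (S * A) ^ 2 ≤ (1 + η) * specNorm A ^ 2) := by
  obtain ⟨hσ, hnorm⟩ := embedding_preserves_singular_values_general (T := toEuclideanLin A)
    (U := toEuclideanLin (S * A)) (sub_nonneg.2 hη1.le) (by positivity) hS
  rw [hσA.eq_singularValues, hσSA.eq_singularValues]
  exact ⟨fun i => hσ i, hnorm⟩
end

section
/- (Preconditioned steepest descent, single-step bound.) Let A ∈ ℂ^{m×n} have full column rank with singular values σ₁ ≥ σ₂ ≥ … ≥ σ_n > 0, and let P ∈ ℂ^{n×n} be invertible. Define γ := inf over t > 0 of the spectral norm ‖I − t·P*A*AP‖. Let 2 ≤ i ≤ n and let v ∈ ℂⁿ be a unit vector with σ_i ≤ ‖Av‖ < σ_{i−1}. Define the search direction w := P(P*(A*(Av) − ‖Av‖²·v)) and let v_PSD be a unit vector in span{v, w} minimizing ‖Az‖ over all unit vectors z ∈ span{v, w}. Set gap_i := (σ_{i−1}² − σ_i²)/σ_i² and q := γ + (1−γ)/(1+gap_i). Then either ‖A v_PSD‖ ≤ σ_i, or (‖A v_PSD‖²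 − σ_i²)/(σ_{i−1}² − ‖A v_PSD‖²) ≤ q² · (‖Av‖² − σ_i²)/(σ_{i−1}² − ‖Av‖²). -/
/-!
Since `v_PSD` minimizes the Rayleigh quotient over the span, it suffices to bound the Rayleigh
quotient of `v' = v - t w` for one step size `t` with `‖I - t P*A*AP‖ ≤ g`, and then to let `g`
decrease to `γ`. If `γ ≥ 1`, then `q ≥ 1` and already `v` itself is good enough.

Put `H = A*A`, `u = H⁻¹ v`, `μ = ‖Av‖²` and `C = AP`. Then
`v' - μ u = P (I - t C*C) P⁻¹ (v - μ u)`, and diagonalizing `C*C` shows that `I - t C*C` contracts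
`‖C ·‖` by the factor `g`. So `v'` lies in the ball about `μ u`, in the norm `‖A ·‖`, of radius
`g ‖A (v - μ u)‖`.

Let `l = σᵢ²`, `L = σᵢ₋₁²` be the ends of the spectral gap, let `φ` be the affine function with
`φ 0 = g` and `φ L = 1`, so that `φ l = q`, and let `θ` be the level whose error ratio is `q²` times
that of `μ`. In an eigenbasis of `H` the claim is `∑ (θ - κ) |v'_κ|² ≥ 0`. Lagrange multipliers for
the ball and for the Rayleigh quotient of `v` reduce it to a scalar inequality for each eigenvalue
`κ`: the cubic `φ(κ)² (μ - κ)` must lie below its chord through `l` and `L` for `κ ≥ 0` outside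
`(l, L)`. It does, because cubic and chord meet a third time only at some `κ ≤ 0`.
-/

open Matrix

/-- The error ratio `(x - l) / (L - x)` of the bound; it measures how far a Rayleigh quotient
`x < L` is from the lower end `l` of the spectral gap `(l, L)`. -/
noncomputable def errorRatio (l L x : ℝ) : ℝ := (x - l) / (L - x)

/-- The affine function of `κ` with value `g` at `0` and `1` at `L`. The contraction factor of the
bound is `q = damping γ L (σᵢ²)` with `L = σᵢ₋₁²`. -/
noncomputable def damping (g L κ : ℝ) : ℝ := g + (1 - g) * (κ / L)

section Scalar

variable {g l L κ μ θ ρ : ℝ}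

lemma errorRatio_le_errorRatio (hlL : l ≤ L) (hρμ : ρ ≤ μ) (hμL : μ < L) :
    errorRatio l L ρ ≤ errorRatio l L μ := by
  rw [errorRatio, errorRatio, div_le_div_iff₀ (by linarith) (by linarith)]
  nlinarith [mul_nonneg (sub_nonneg.2 hlL) (sub_nonneg.2 hρμ)]

lemma errorRatio_nonneg (hlμ : l ≤ μ) (hμL : μ < L) : 0 ≤ errorRatio l L μ :=
  div_nonneg (sub_nonneg.2 hlμ) (sub_pos.2 hμL).le

lemma exists_errorRatio_eq_mul {c : ℝ} (hlμ : l ≤ μ) (hμL : μ < L) (hc0 : 0 ≤ c) (hc1 : c ≤ 1) :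
    ∃ θ ∈ Set.Icc l μ, errorRatio l L θ = c * errorRatio l L μ := by
  have hcont : ContinuousOn (errorRatio l L) (Set.Icc l μ) :=
    ContinuousOn.div (by fun_prop) (by fun_prop) fun x hx ↦ by linarith [hx.2]
  have hμ := errorRatio_nonneg hlμ hμL
  refine intermediate_value_Icc hlμ hcont ⟨?_, mul_le_of_le_one_left hμ hc1⟩
  simpa [errorRatio] using mul_nonneg hc0 hμ

lemma damping_eq_add_div_gap (hl : l ≠ 0) :
    damping g L l = g + (1 - g) / (1 + (L - l) / l) := by
  have hgap : 1 + (L - l) / l = L / l := by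
    field_simp
    ring
  rw [hgap, div_div_eq_mul_div, mul_div_assoc, damping]

lemma damping_pos (hg0 : 0 < g) (hg1 : g ≤ 1) (hL : 0 ≤ L) (hκ : 0 ≤ κ) : 0 < damping g L κ :=
  add_pos_of_pos_of_nonneg hg0 (mul_nonneg (sub_nonneg.2 hg1) (div_nonneg hκ hL))

lemma damping_le_one (hg1 : g ≤ 1) (hL : 0 < L) (hκL : κ ≤ L) : damping g L κ ≤ 1 := by
  have := mul_le_of_le_one_right (sub_nonneg.2 hg1) ((div_le_one hL).2 hκL)
  rw [damping]
  linarith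

lemma one_le_damping (hg1 : 1 ≤ g) (hL : 0 < L) (hκL : κ ≤ L) : 1 ≤ damping g L κ := by
  have := mul_le_mul_of_nonneg_left ((div_le_one hL).2 hκL) (sub_nonneg.2 hg1)
  rw [damping]
  linarith

/-- As a function of `κ`, the right side is the chord at `l` and `L` of the cubic on the left. The
third root of their difference is nonpositive, hence the sign for `κ ≥ 0` off the gap. -/
lemma damping_sq_mul_sub_le (hg0 : 0 ≤ g) (hg1 : g ≤ 1) (hl : 0 < l) (hlL : l < L) (hμL : μ < L)
    (hθL : θ < L) (hθ : errorRatio l L θ = damping g L l ^ 2 * errorRatio l L μ)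
    (hκ0 : 0 ≤ κ) (hκ : κ ≤ l ∨ L ≤ κ) :
    (L - θ) * (damping g L κ ^ 2 * (μ - κ)) ≤ (L - μ) * (θ - κ) := by
  have hL : 0 < L := hl.trans hlL
  obtain ⟨h, hgh⟩ : ∃ h, g = 1 - h * L := ⟨(1 - g) / L, by field_simp; ring⟩
  have hh : 0 ≤ h := nonneg_of_mul_nonneg_left (by linarith) hL
  have hdamping (x : ℝ) : damping g L x = 1 - h * (L - x) := by
    rw [damping, hgh]
    field_simp
    ring
  rw [errorRatio, errorRatio, ← mul_div_assoc, div_eq_div_iff (by linarith) (by linarith),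
    hdamping] at hθ
  have hfactor : (L - l) * ((L - μ) * (θ - κ) - (L - θ) * (damping g L κ ^ 2 * (μ - κ))) =
      (L - l) * ((κ - l) * (κ - L) * ((L - θ) * (h * (2 * g + h * (κ + l + (L - μ)))))) := by
    rw [hdamping, hgh]
    linear_combination (L - κ) * hθ
  have hgap : 0 ≤ (κ - l) * (κ - L) := by
    rcases hκ with hκ | hκ
    · exact mul_nonneg_of_nonpos_of_nonpos (by linarith) (by linarith)
    · exact mul_nonneg (by linarith) (by linarith)
  have hlinear : 0 ≤ (L - θ) * (h * (2 * g + h * (κ + l + (L - μ)))) := by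
    have := sub_nonneg.2 hμL.le
    have := sub_nonneg.2 hθL.le
    positivity
  rw [mul_right_inj' (sub_pos.2 hlL).ne'] at hfactor
  linarith [mul_nonneg hgap hlinear]

lemma sum_damping_mul_eq {ι : Type*} [Fintype ι] {κ c : ι → ℝ}
    (hc : ∑ j, (κ j - μ) * κ j ^ 2 * c j = 0) :
    ∑ j, g * μ * damping g L (κ j) * ((μ - κ j) * κ j * c j) =
      g ^ 2 * ∑ j, κ j * (κ j - μ) ^ 2 * c j := by
  have hterm (j : ι) : g * μ * damping g L (κ j) * ((μ - κ j) * κ j * c j) =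
      g ^ 2 * (κ j * (κ j - μ) ^ 2 * c j) -
        g * damping g L μ * ((κ j - μ) * κ j ^ 2 * c j) := by
    rw [damping, damping]
    ring
  simp only [hterm, Finset.sum_sub_distrib, ← Finset.mul_sum, hc, mul_zero, sub_zero]

end Scalar

section Coordinates

variable {V : Type*} [SeminormedAddCommGroup V]

lemma mul_div_add_mul_norm_sq_le {s τ : ℝ} (hτ : 0 ≤ τ) (hsτ : 0 < s + τ) (y z : V) :
    s * τ / (s + τ) * ‖z‖ ^ 2 ≤ s * ‖y‖ ^ 2 + τ * ‖y - z‖ ^ 2 := by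
  have hyz : (‖y‖ - ‖z‖) ^ 2 ≤ ‖y - z‖ ^ 2 := sq_le_sq.2 <| by
    simpa using abs_norm_sub_norm_le y z
  calc s * τ / (s + τ) * ‖z‖ ^ 2
      ≤ s * ‖y‖ ^ 2 + τ * (‖y‖ - ‖z‖) ^ 2 := by
        rw [div_mul_eq_mul_div, div_le_iff₀ hsτ]
        linarith [sq_nonneg ((s + τ) * ‖y‖ - τ * ‖z‖)]
    _ ≤ s * ‖y‖ ^ 2 + τ * ‖y - z‖ ^ 2 := by gcongr

variable [NormedSpace ℝ V] {g l L μ θ : ℝ}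

/-- One eigenvalue's share of the Lagrangian: the multiplier `damping g L θ` of the ball constraint,
relative to `g`, is chosen so that the weights of the two squares add up to a multiple of
`damping g L κ`. The factor `μ (L - θ) / (θ (L - μ)) ≥ 1` is slack: the estimate would tolerate a
ball with squared radius larger by that factor. -/
lemma damping_mul_le_add_norm_sub_sq {κ : ℝ} (hg0 : 0 < g) (hg1 : g ≤ 1) (hl : 0 < l)
    (hlL : l < L) (hμL : μ < L) (hθ0 : 0 < θ) (hθL : θ < L)
    (hθ : errorRatio l L θ = damping g L l ^ 2 * errorRatio l L μ)
    (hκ0 : 0 < κ) (hκ : κ ≤ l ∨ L ≤ κ) (u y : V) :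
    damping g L θ * (μ * (L - θ) / (θ * (L - μ))) *
        (g * μ * damping g L κ * ((μ - κ) * κ * ‖u‖ ^ 2)) ≤
      g * ((θ - κ) * ‖y‖ ^ 2) + damping g L θ * (κ * ‖y - μ • u‖ ^ 2) := by
  have hL : 0 < L := hl.trans hlL
  have hφκ : 0 < damping g L κ := damping_pos hg0 hg1 hL.le hκ0.le
  have hφθ : 0 < damping g L θ := damping_pos hg0 hg1 hL.le hθ0.le
  have hweights : g * (θ - κ) + damping g L θ * κ = θ * damping g L κ := by
    rw [damping, damping]
    ring
  have hμL' := sub_pos.2 hμL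
  have hkey : (L - θ) / (L - μ) * (damping g L κ * (μ - κ)) ≤ (θ - κ) / damping g L κ := by
    rw [div_mul_eq_mul_div, div_le_div_iff₀ hμL' hφκ]
    linarith [damping_sq_mul_sub_le hg0.le hg1 hl hlL hμL hθL hθ hκ0.le hκ]
  calc _ = damping g L θ * (g * κ * μ ^ 2 / θ * ‖u‖ ^ 2) *
        ((L - θ) / (L - μ) * (damping g L κ * (μ - κ))) := by field_simp
    _ ≤ damping g L θ * (g * κ * μ ^ 2 / θ * ‖u‖ ^ 2) * ((θ - κ) / damping g L κ) := by gcongr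
    _ = g * (θ - κ) * (damping g L θ * κ) / (θ * damping g L κ) * ‖μ • u‖ ^ 2 := by
      rw [norm_smul, mul_pow, Real.norm_eq_abs, sq_abs]
      field_simp
    _ ≤ g * (θ - κ) * ‖y‖ ^ 2 + damping g L θ * κ * ‖y - μ • u‖ ^ 2 := by
      rw [← hweights]
      refine mul_div_add_mul_norm_sq_le (by positivity) ?_ y (μ • u)
      rw [hweights]
      positivity
    _ = _ := by ring

variable {ι : Type*} [Fintype ι] {κ : ι → ℝ}

lemma sum_mul_norm_sq_le_of_sum_norm_sub_sq_le (hg0 : 0 < g) (hg1 : g ≤ 1) (hl : 0 < l)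
    (hlL : l < L) (hθ0 : 0 < θ) (hθμ : θ ≤ μ) (hμL : μ < L)
    (hθ : errorRatio l L θ = damping g L l ^ 2 * errorRatio l L μ)
    (hκ0 : ∀ j, 0 < κ j) (hκ : ∀ j, κ j ≤ l ∨ L ≤ κ j) (u y : ι → V)
    (hu : ∑ j, (κ j - μ) * κ j ^ 2 * ‖u j‖ ^ 2 = 0)
    (hy : ∑ j, κ j * ‖y j - μ • u j‖ ^ 2 ≤ g ^ 2 * ∑ j, κ j * (κ j - μ) ^ 2 * ‖u j‖ ^ 2) :
    ∑ j, κ j * ‖y j‖ ^ 2 ≤ θ * ∑ j, ‖y j‖ ^ 2 := by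
  have hφ : 0 < damping g L θ := damping_pos hg0 hg1 (hl.trans hlL).le hθ0.le
  have hradius : 0 ≤ g ^ 2 * ∑ j, κ j * (κ j - μ) ^ 2 * ‖u j‖ ^ 2 :=
    mul_nonneg (sq_nonneg g) <| Finset.sum_nonneg fun j _ ↦ by have := hκ0 j; positivity
  have hslack : 1 ≤ μ * (L - θ) / (θ * (L - μ)) := by
    rw [one_le_div (mul_pos hθ0 (by linarith))]
    nlinarith [mul_le_mul_of_nonneg_right hθμ (hl.trans hlL).le]
  have hsum := Finset.sum_le_sum fun j (_ : j ∈ Finset.univ) ↦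
    damping_mul_le_add_norm_sub_sq hg0 hg1 hl hlL hμL hθ0 (hθμ.trans_lt hμL) hθ (hκ0 j) (hκ j)
      (u j) (y j)
  rw [← Finset.mul_sum, sum_damping_mul_eq hu, Finset.sum_add_distrib, ← Finset.mul_sum,
    ← Finset.mul_sum, mul_assoc] at hsum
  have hball : damping g L θ * ∑ j, κ j * ‖y j - μ • u j‖ ^ 2 ≤
      damping g L θ * (μ * (L - θ) / (θ * (L - μ)) *
        (g ^ 2 * ∑ j, κ j * (κ j - μ) ^ 2 * ‖u j‖ ^ 2)) := by
    gcongr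
    exact hy.trans (le_mul_of_one_le_left hradius hslack)
  have hnonneg : 0 ≤ ∑ j, (θ - κ j) * ‖y j‖ ^ 2 :=
    nonneg_of_mul_nonneg_right (by linarith) hg0
  simpa [sub_mul, Finset.mul_sum] using hnonneg

end Coordinates

section Operator

open LinearMap (adjoint)

variable {𝕜 E F G : Type*} [RCLike 𝕜]
  [NormedAddCommGroup E] [InnerProductSpace 𝕜 E] [FiniteDimensional 𝕜 E]
  [NormedAddCommGroup F] [InnerProductSpace 𝕜 F] [FiniteDimensional 𝕜 F]
  [NormedAddCommGroup G] [InnerProductSpace 𝕜 G] [FiniteDimensional 𝕜 G]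

section Eigenbasis

variable {ι : Type*} [Fintype ι] {A : E →ₗ[𝕜] F} {b : OrthonormalBasis ι 𝕜 E} {κ : ι → ℝ}

lemma repr_adjoint_apply_self (hb : ∀ j, adjoint A (A (b j)) = (κ j : 𝕜) • b j) (x : E) (j : ι) :
    b.repr (adjoint A (A x)) j = κ j * b.repr x j := by
  rw [b.repr_apply_apply, b.repr_apply_apply, LinearMap.adjoint_inner_right,
    ← LinearMap.adjoint_inner_left, hb, inner_smul_left, RCLike.conj_ofReal]

lemma norm_apply_sq_eq_sum (hb : ∀ j, adjoint A (A (b j)) = (κ j : 𝕜) • b j) (x : E) :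
    ‖A x‖ ^ 2 = ∑ j, κ j * ‖b.repr x j‖ ^ 2 := by
  rw [norm_sq_eq_re_inner (𝕜 := 𝕜), ← LinearMap.adjoint_inner_right, ← b.repr.inner_map_map,
    PiLp.inner_apply, map_sum]
  refine Finset.sum_congr rfl fun j _ ↦ ?_
  rw [repr_adjoint_apply_self hb, ← smul_eq_mul (κ j : 𝕜), inner_smul_right,
    inner_self_eq_norm_sq_to_K, ← RCLike.ofReal_pow, ← RCLike.ofReal_mul, RCLike.ofReal_re]

lemma norm_apply_basis_sq (hb : ∀ j, adjoint A (A (b j)) = (κ j : 𝕜) • b j) (j : ι) :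
    ‖A (b j)‖ ^ 2 = κ j := by
  rw [norm_sq_eq_re_inner (𝕜 := 𝕜), ← LinearMap.adjoint_inner_right, hb, inner_smul_right,
    inner_self_eq_norm_sq_to_K, b.orthonormal.norm_eq_one]
  simp

lemma eigenvalue_nonneg (hb : ∀ j, adjoint A (A (b j)) = (κ j : 𝕜) • b j) (j : ι) : 0 ≤ κ j :=
  norm_apply_basis_sq hb j ▸ sq_nonneg _

lemma eigenvalue_pos (hA : Function.Injective A)
    (hb : ∀ j, adjoint A (A (b j)) = (κ j : 𝕜) • b j) (j : ι) : 0 < κ j := by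
  have hAb : A (b j) ≠ 0 := (map_ne_zero_iff A hA).2 (b.orthonormal.ne_zero j)
  rw [← norm_apply_basis_sq hb]
  positivity

lemma norm_apply_sq_le_of_norm_apply_sub_sq_le {g l L μ θ : ℝ} (hA : Function.Injective A)
    (hb : ∀ j, adjoint A (A (b j)) = (κ j : 𝕜) • b j) (hκ : ∀ j, κ j ≤ l ∨ L ≤ κ j)
    (hg0 : 0 < g) (hg1 : g ≤ 1) (hl : 0 < l) (hlθ : l ≤ θ) (hθμ : θ ≤ μ) (hμL : μ < L)
    (hθ : errorRatio l L θ = damping g L l ^ 2 * errorRatio l L μ) {u v v' : E}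
    (hu : adjoint A (A u) = v) (hv : ‖A v‖ ^ 2 = μ * ‖v‖ ^ 2)
    (hv' : ‖A (v' - (μ : 𝕜) • u)‖ ^ 2 ≤ g ^ 2 * ‖A (v - (μ : 𝕜) • u)‖ ^ 2) :
    ‖A v'‖ ^ 2 ≤ θ * ‖v'‖ ^ 2 := by
  have hvj (j : ι) : b.repr v j = (κ j : 𝕜) * b.repr u j := by
    rw [← hu, repr_adjoint_apply_self hb]
  have hnorm (z : E) : ‖z‖ ^ 2 = ∑ j, ‖b.repr z j‖ ^ 2 := by
    rw [← b.repr.norm_map, EuclideanSpace.norm_sq_eq]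
  rw [norm_apply_sq_eq_sum hb, hnorm v']
  refine sum_mul_norm_sq_le_of_sum_norm_sub_sq_le hg0 hg1 hl (by linarith) (hl.trans_le hlθ) hθμ
    hμL hθ (eigenvalue_pos hA hb) hκ (b.repr u) (b.repr v') ?_ ?_
  · rw [norm_apply_sq_eq_sum hb, hnorm, Finset.mul_sum, ← sub_eq_zero,
      ← Finset.sum_sub_distrib] at hv
    rw [← hv]
    refine Finset.sum_congr rfl fun j _ ↦ ?_
    rw [hvj, norm_mul, RCLike.norm_ofReal, mul_pow, sq_abs]
    ring
  · rw [norm_apply_sq_eq_sum hb, norm_apply_sq_eq_sum hb] at hv'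
    have hcoord (j : ι) : b.repr (v - (μ : 𝕜) • u) j = ((κ j - μ : ℝ) : 𝕜) * b.repr u j := by
      simp [hvj, sub_mul, RCLike.real_smul_eq_coe_mul]
    have hcoord' (j : ι) :
        b.repr (v' - (μ : 𝕜) • u) j = b.repr v' j - μ • b.repr u j := by
      simp [RCLike.real_smul_eq_coe_mul]
    simpa only [hcoord, hcoord', norm_mul, RCLike.norm_ofReal, mul_pow, sq_abs, mul_assoc]
      using hv'

end Eigenbasis

lemma norm_apply_sub_smul_adjoint_sq_le {C : G →ₗ[𝕜] F} {t g : ℝ}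
    (hg : ∀ x, ‖x - (t : 𝕜) • adjoint C (C x)‖ ≤ g * ‖x‖) (x : G) :
    ‖C (x - (t : 𝕜) • adjoint C (C x))‖ ^ 2 ≤ g ^ 2 * ‖C x‖ ^ 2 := by
  have hC : (adjoint C ∘ₗ C).IsSymmetric := C.isSymmetric_adjoint_comp_self
  set b := hC.eigenvectorBasis rfl
  set κ := hC.eigenvalues rfl
  have hb (j) : adjoint C (C (b j)) = (κ j : 𝕜) • b j := hC.apply_eigenvectorBasis rfl j
  have hκ (j) : |1 - t * κ j| ≤ g := by
    have hbj : b j - (t : 𝕜) • adjoint C (C (b j)) = ((1 - t * κ j : ℝ) : 𝕜) • b j := by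
      rw [hb]
      push_cast
      module
    simpa only [hbj, norm_smul, RCLike.norm_ofReal, b.orthonormal.norm_eq_one, mul_one]
      using hg (b j)
  have hcoord (j) :
      b.repr (x - (t : 𝕜) • adjoint C (C x)) j = ((1 - t * κ j : ℝ) : 𝕜) * b.repr x j := by
    simp [repr_adjoint_apply_self hb, RCLike.real_smul_eq_coe_mul, sub_mul, mul_assoc]
  rw [norm_apply_sq_eq_sum hb, norm_apply_sq_eq_sum hb, Finset.mul_sum]
  refine Finset.sum_le_sum fun j _ ↦ ?_
  rw [hcoord, norm_mul, RCLike.norm_ofReal, mul_pow, mul_left_comm]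
  have hκj := hκ j
  have := eigenvalue_nonneg hb j
  gcongr

/-- The number `γ` of a preconditioned operator `C = A ∘ P`: the optimal contraction factor of the
damped Richardson iterations `x ↦ x - t C*C x`. -/
noncomputable def contractionNumber (C : G →ₗ[𝕜] F) : ℝ :=
  ⨅ t : Set.Ioi (0 : ℝ),
    ‖LinearMap.toContinuousLinearMap (LinearMap.id - ((t : ℝ) : 𝕜) • adjoint C ∘ₗ C)‖

lemma contractionNumber_nonneg (C : G →ₗ[𝕜] F) : 0 ≤ contractionNumber C :=
  Real.iInf_nonneg fun _ ↦ norm_nonneg _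

lemma exists_norm_sub_smul_adjoint_le {C : G →ₗ[𝕜] F} {g : ℝ} (hg : contractionNumber C < g) :
    ∃ t : ℝ, ∀ x, ‖x - (t : 𝕜) • adjoint C (C x)‖ ≤ g * ‖x‖ := by
  obtain ⟨t, ht⟩ := exists_lt_of_ciInf_lt hg
  exact ⟨t, fun x ↦ ContinuousLinearMap.le_of_opNorm_le _ ht.le x⟩

variable {A : E →ₗ[𝕜] F} {P : G →ₗ[𝕜] E} {v w : E} {μ : ℝ}

lemma norm_apply_step_sub_sq_le (hP : Function.Surjective P) {t g : ℝ}
    (hg : ∀ x, ‖x - (t : 𝕜) • adjoint (A ∘ₗ P) ((A ∘ₗ P) x)‖ ≤ g * ‖x‖)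
    (hw : w = P (adjoint P (adjoint A (A v) - (μ : 𝕜) • v))) {u : E} (hu : adjoint A (A u) = v) :
    ‖A (v - (t : 𝕜) • w - (μ : 𝕜) • u)‖ ^ 2 ≤ g ^ 2 * ‖A (v - (μ : 𝕜) • u)‖ ^ 2 := by
  obtain ⟨x, hx⟩ := hP (v - (μ : 𝕜) • u)
  have hstep : v - (t : 𝕜) • w - (μ : 𝕜) • u =
      P (x - (t : 𝕜) • adjoint (A ∘ₗ P) ((A ∘ₗ P) x)) := by
    simp [LinearMap.adjoint_comp, hx, hw, hu, sub_right_comm]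
  rw [hstep, ← hx]
  exact norm_apply_sub_smul_adjoint_sq_le hg x

lemma step_ne_zero (hv0 : v ≠ 0) (hv : ‖A v‖ ^ 2 = μ * ‖v‖ ^ 2)
    (hw : w = P (adjoint P (adjoint A (A v) - (μ : 𝕜) • v))) (t : 𝕜) : v - t • w ≠ 0 := by
  set r := adjoint A (A v) - (μ : 𝕜) • v
  have hrv : inner 𝕜 r v = 0 := by
    rw [inner_sub_left, LinearMap.adjoint_inner_left, inner_smul_left, inner_self_eq_norm_sq_to_K,
      inner_self_eq_norm_sq_to_K, RCLike.conj_ofReal, sub_eq_zero]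
    exact_mod_cast hv
  have hrw : inner 𝕜 r w = (‖adjoint P r‖ : 𝕜) ^ 2 := by
    rw [hw, ← LinearMap.adjoint_inner_left, inner_self_eq_norm_sq_to_K]
  intro hstep
  have hvw : v = t • w := sub_eq_zero.1 hstep
  rw [hvw, inner_smul_right, hrw, mul_eq_zero] at hrv
  rcases hrv with ht | hPr
  · exact hv0 (by rw [hvw, ht, zero_smul])
  · have hPr0 : adjoint P r = 0 := by simpa using hPr
    exact hv0 (by rw [hvw, hw, hPr0, map_zero, smul_zero])

variable {ι : Type*} [Fintype ι] {b : OrthonormalBasis ι 𝕜 E} {κ : ι → ℝ} {l L ρ : ℝ}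

lemma errorRatio_le_of_norm_sub_smul_adjoint_le (hA : Function.Injective A)
    (hb : ∀ j, adjoint A (A (b j)) = (κ j : 𝕜) • b j) (hκ : ∀ j, κ j ≤ l ∨ L ≤ κ j)
    (hP : Function.Surjective P) (hl : 0 < l) (hlμ : l ≤ μ) (hμL : μ < L) (hv0 : v ≠ 0)
    (hv : ‖A v‖ ^ 2 = μ * ‖v‖ ^ 2) (hw : w = P (adjoint P (adjoint A (A v) - (μ : 𝕜) • v)))
    (hρ : ∀ z ∈ Submodule.span 𝕜 {v, w}, ρ * ‖z‖ ^ 2 ≤ ‖A z‖ ^ 2) {t g : ℝ} (hg0 : 0 < g)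
    (hg1 : g ≤ 1) (hg : ∀ x, ‖x - (t : 𝕜) • adjoint (A ∘ₗ P) ((A ∘ₗ P) x)‖ ≤ g * ‖x‖) :
    errorRatio l L ρ ≤ damping g L l ^ 2 * errorRatio l L μ := by
  have hlL : l < L := hlμ.trans_lt hμL
  have hq0 := damping_pos hg0 hg1 (hl.trans hlL).le hl.le
  have hq1 := damping_le_one hg1 (hl.trans hlL) hlL.le
  obtain ⟨θ, ⟨hlθ, hθμ⟩, hθ⟩ :=
    exists_errorRatio_eq_mul hlμ hμL (sq_nonneg _) (pow_le_one₀ hq0.le hq1)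
  have hsurj : Function.Surjective (adjoint A ∘ₗ A) :=
    LinearMap.injective_iff_surjective.1 (A.adjoint_comp_self_injective_iff.2 hA)
  obtain ⟨u, hu⟩ := hsurj v
  have hupper : ‖A (v - (t : 𝕜) • w)‖ ^ 2 ≤ θ * ‖v - (t : 𝕜) • w‖ ^ 2 :=
    norm_apply_sq_le_of_norm_apply_sub_sq_le hA hb hκ hg0 hg1 hl hlθ hθμ hμL hθ hu hv
      (norm_apply_step_sub_sq_le hP hg hw hu)
  have hlower : ρ * ‖v - (t : 𝕜) • w‖ ^ 2 ≤ ‖A (v - (t : 𝕜) • w)‖ ^ 2 :=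
    hρ _ (Submodule.mem_span_pair.2 ⟨1, -t, by module⟩)
  have hstep := norm_pos_iff.2 (step_ne_zero hv0 hv hw (t : 𝕜))
  have hρθ : ρ ≤ θ := le_of_mul_le_mul_right (hlower.trans hupper) (by positivity)
  exact hθ ▸ errorRatio_le_errorRatio hlL.le hρθ (hθμ.trans_lt hμL)

theorem psd_single_step_bound_general (hA : Function.Injective A)
    (hb : ∀ j, adjoint A (A (b j)) = (κ j : 𝕜) • b j) (hκ : ∀ j, κ j ≤ l ∨ L ≤ κ j)
    (hP : Function.Surjective P) (hl : 0 < l) (hlμ : l ≤ μ) (hμL : μ < L) (hv0 : v ≠ 0)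
    (hv : ‖A v‖ ^ 2 = μ * ‖v‖ ^ 2) (hw : w = P (adjoint P (adjoint A (A v) - (μ : 𝕜) • v)))
    (hρ : ∀ z ∈ Submodule.span 𝕜 {v, w}, ρ * ‖z‖ ^ 2 ≤ ‖A z‖ ^ 2) :
    errorRatio l L ρ ≤ damping (contractionNumber (A ∘ₗ P)) L l ^ 2 * errorRatio l L μ := by
  set γ := contractionNumber (A ∘ₗ P)
  have hlL : l < L := hlμ.trans_lt hμL
  rcases le_or_gt 1 γ with hγ | hγ
  · have hρμ : ρ ≤ μ := by
      have hρv := hρ v (Submodule.mem_span_pair.2 ⟨1, 0, by module⟩)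
      exact le_of_mul_le_mul_right (hρv.trans_eq hv) (by positivity)
    refine (errorRatio_le_errorRatio hlL.le hρμ hμL).trans <|
      le_mul_of_one_le_left (errorRatio_nonneg hlμ hμL) (one_le_pow₀ ?_)
    exact one_le_damping hγ (hl.trans hlL) hlL.le
  · have hcont : Continuous fun g ↦ damping g L l ^ 2 * errorRatio l L μ := by
      unfold damping
      fun_prop
    refine ge_of_tendsto ((hcont.tendsto γ).mono_left (nhdsWithin_le_nhds (s := Set.Ioi γ))) ?_
    filter_upwards [Ioo_mem_nhdsGT hγ] with g ⟨hγg, hg1⟩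
    obtain ⟨t, ht⟩ := exists_norm_sub_smul_adjoint_le hγg
    exact errorRatio_le_of_norm_sub_smul_adjoint_le hA hb hκ hP hl hlμ hμL hv0 hv hw hρ
      ((contractionNumber_nonneg _).trans_lt hγg) hg1.le ht

end Operator

lemma mul_norm_le_norm_apply_of_unit {𝕜 E F : Type*} [RCLike 𝕜] [NormedAddCommGroup E]
    [NormedSpace 𝕜 E] [SeminormedAddCommGroup F] [NormedSpace 𝕜 F] {A : E →ₗ[𝕜] F}
    {W : Submodule 𝕜 E} {c : ℝ} (hc : ∀ z ∈ W, ‖z‖ = 1 → c ≤ ‖A z‖) {z : E} (hz : z ∈ W) :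
    c * ‖z‖ ≤ ‖A z‖ := by
  rcases eq_or_ne z 0 with rfl | hz0
  · simp
  have hunit := hc _ (W.smul_mem _ hz) (norm_smul_inv_norm (𝕜 := 𝕜) hz0)
  rwa [map_smul, norm_smul, norm_inv, RCLike.norm_ofReal, abs_norm, inv_mul_eq_div,
    le_div_iff₀ (norm_pos_iff.2 hz0)] at hunit

section Matrix

variable {m n : ℕ} {A : Matrix (Fin m) (Fin n) ℂ} {σ : Fin n → ℝ}

lemma HasSingularValues.exists_orthonormalBasis (hσ : HasSingularValues A σ) :
    ∃ b : OrthonormalBasis (Fin n) ℂ (EuclideanSpace ℂ (Fin n)), ∀ j,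
      LinearMap.adjoint (toEuclideanLin A) (toEuclideanLin A (b j)) =
        ((σ j ^ 2 : ℝ) : ℂ) • b j := by
  obtain ⟨-, -, B, hB, hAB⟩ := hσ
  have hspan := hB.linearIndependent.span_eq_top_of_card_eq_finrank' (by simp)
  refine ⟨OrthonormalBasis.mk hB hspan.ge, fun j ↦ ?_⟩
  rw [OrthonormalBasis.coe_mk, ← hAB, mulE, toLpLin_mul_same,
    toEuclideanLin_conjTranspose_eq_adjoint, LinearMap.comp_apply]

lemma HasSingularValues.sq_le_or_sq_le (hσ : HasSingularValues A σ) {i k : Fin n} (hki : k ⋖ i)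
    (j : Fin n) : σ j ^ 2 ≤ σ i ^ 2 ∨ σ k ^ 2 ≤ σ j ^ 2 := by
  obtain ⟨hanti, hnonneg, -⟩ := hσ
  rcases le_or_gt i j with hij | hji
  · exact .inl (pow_le_pow_left₀ (hnonneg j) (hanti hij) 2)
  · exact .inr (pow_le_pow_left₀ (hnonneg k) (hanti (hki.le_of_lt hji)) 2)

lemma sInf_specNorm_eq_contractionNumber {k : ℕ} (A : Matrix (Fin m) (Fin n) ℂ)
    (P : Matrix (Fin n) (Fin k) ℂ) :
    sInf {r : ℝ | ∃ t : ℝ, 0 < t ∧ r = specNorm (1 - (t : ℂ) • (Pᴴ * Aᴴ * A * P))} =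
      contractionNumber (toEuclideanLin A ∘ₗ toEuclideanLin P) := by
  have hnorm (t : ℝ) : specNorm (1 - (t : ℂ) • (Pᴴ * Aᴴ * A * P)) =
      ‖LinearMap.toContinuousLinearMap (LinearMap.id - (t : ℂ) •
        LinearMap.adjoint (toEuclideanLin A ∘ₗ toEuclideanLin P) ∘ₗ
          (toEuclideanLin A ∘ₗ toEuclideanLin P))‖ := by
    rw [specNorm, LinearMap.adjoint_comp, ← toEuclideanLin_conjTranspose_eq_adjoint,
      ← toEuclideanLin_conjTranspose_eq_adjoint, map_sub, map_smul, toLpLin_one]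
    simp only [toLpLin_mul_same, LinearMap.comp_assoc]
  rw [contractionNumber, iInf]
  congr 1
  ext r
  constructor
  · rintro ⟨t, ht, rfl⟩
    exact ⟨⟨t, ht⟩, (hnorm t).symm⟩
  · rintro ⟨t, rfl⟩
    exact ⟨t, t.2, (hnorm t).symm⟩

lemma toEuclideanLin_surjective {𝕜 ι : Type*} [RCLike 𝕜] [Fintype ι] [DecidableEq ι]
    {P : Matrix ι ι 𝕜} (hP : IsUnit P.det) :
    Function.Surjective (toEuclideanLin P) := by
  intro x
  refine ⟨toEuclideanLin P⁻¹ x, ?_⟩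
  rw [← LinearMap.comp_apply, ← toLpLin_mul_same, P.mul_nonsing_inv hP, toLpLin_one,
    LinearMap.id_apply]

end Matrix

/-- Preconditioned steepest descent, single-step bound; Neymeyr:
with `γ := inf_{t>0} ‖I − t·PᴴAᴴAP‖`, a unit vector `v` with `σᵢ ≤ ‖Av‖ < σᵢ₋₁`
(1-based indexing: here `i : ℕ` with `1 ≤ i < n` indexes `σ` 0-based, so `σ ⟨i⟩` is the paper's
`σᵢ₊₁` and `σ ⟨i-1⟩` the paper's `σᵢ`), search direction
`w := P(Pᴴ(Aᴴ(Av) − ‖Av‖²·v))`, and `v_PSD` a unit-norm minimizer of `‖Az‖` over the unit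
sphere of `span{v,w}`: either `‖A v_PSD‖ ≤ σᵢ`, or the error ratio contracts by
`q² = (γ + (1−γ)/(1+gapᵢ))²`. -/
theorem psd_single_step_bound
    {m n : ℕ} (A : Matrix (Fin m) (Fin n) ℂ)
    (hrank : Function.Injective (mulE A))
    (σ : Fin n → ℝ) (hσ : HasSingularValues A σ) (hpos : ∀ i, 0 < σ i)
    (P : Matrix (Fin n) (Fin n) ℂ) (hPinv : IsUnit P.det)
    (γ : ℝ)
    (hγ : γ = sInf {r : ℝ | ∃ t : ℝ, 0 < t ∧
      r = specNorm ((1 : Matrix (Fin n) (Fin n) ℂ) - ((t : ℝ) : ℂ) • (Pᴴ * Aᴴ * A * P))})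
    (i : ℕ) (hi1 : 1 ≤ i) (hin : i < n)
    (v : EuclideanSpace ℂ (Fin n)) (hv : ‖v‖ = 1)
    (hlo : σ ⟨i, hin⟩ ≤ ‖mulE A v‖) (hhi : ‖mulE A v‖ < σ ⟨i - 1, by omega⟩)
    (w : EuclideanSpace ℂ (Fin n))
    (hw : w = mulE P (mulE Pᴴ
      (mulE Aᴴ (mulE A v) - ((‖mulE A v‖ ^ 2 : ℝ) : ℂ) • v)))
    (vPSD : EuclideanSpace ℂ (Fin n)) (hPSDnorm : ‖vPSD‖ = 1)
    (hPSDmem : vPSD ∈ Submodule.span ℂ ({v, w} : Set (EuclideanSpace ℂ (Fin n))))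
    (hPSDmin : ∀ z ∈ Submodule.span ℂ ({v, w} : Set (EuclideanSpace ℂ (Fin n))),
      ‖z‖ = 1 → ‖mulE A vPSD‖ ≤ ‖mulE A z‖)
    (gapi q : ℝ)
    (hgapi : gapi = (σ ⟨i - 1, by omega⟩ ^ 2 - σ ⟨i, hin⟩ ^ 2) / σ ⟨i, hin⟩ ^ 2)
    (hq : q = γ + (1 - γ) / (1 + gapi)) :
    ‖mulE A vPSD‖ ≤ σ ⟨i, hin⟩ ∨
      (‖mulE A vPSD‖ ^ 2 - σ ⟨i, hin⟩ ^ 2) / (σ ⟨i - 1, by omega⟩ ^ 2 - ‖mulE A vPSD‖ ^ 2) ≤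
        q ^ 2 * ((‖mulE A v‖ ^ 2 - σ ⟨i, hin⟩ ^ 2) /
          (σ ⟨i - 1, by omega⟩ ^ 2 - ‖mulE A v‖ ^ 2)) := by
  obtain ⟨b, hb⟩ := hσ.exists_orthonormalBasis
  have hcov : (⟨i - 1, by omega⟩ : Fin n) ⋖ ⟨i, hin⟩ :=
    Fin.covBy_iff.2 (Nat.covBy_iff_add_one_eq.2 (Nat.sub_add_cancel hi1))
  have hlo2 : σ ⟨i, hin⟩ ^ 2 ≤ ‖mulE A v‖ ^ 2 := pow_le_pow_left₀ (hpos _).le hlo 2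
  have hhi2 : ‖mulE A v‖ ^ 2 < σ ⟨i - 1, by omega⟩ ^ 2 :=
    pow_lt_pow_left₀ hhi (norm_nonneg _) two_ne_zero
  have hq' : q = damping γ (σ ⟨i - 1, by omega⟩ ^ 2) (σ ⟨i, hin⟩ ^ 2) := by
    rw [hq, hgapi, damping_eq_add_div_gap (pow_pos (hpos _) 2).ne']
  have hw' : w = toEuclideanLin P (LinearMap.adjoint (toEuclideanLin P)
      (LinearMap.adjoint (toEuclideanLin A) (toEuclideanLin A v) -
        ((‖mulE A v‖ ^ 2 : ℝ) : ℂ) • v)) := by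
    simpa only [mulE, toEuclideanLin_conjTranspose_eq_adjoint] using hw
  have hρ : ∀ z ∈ Submodule.span ℂ {v, w},
      ‖mulE A vPSD‖ ^ 2 * ‖z‖ ^ 2 ≤ ‖toEuclideanLin A z‖ ^ 2 := fun z hz ↦ by
    rw [← mul_pow]
    exact pow_le_pow_left₀ (by positivity) (mul_norm_le_norm_apply_of_unit hPSDmin hz) 2
  right
  rw [hq', hγ, sInf_specNorm_eq_contractionNumber]
  exact psd_single_step_bound_general hrank hb (hσ.sq_le_or_sq_le hcov)
    (toEuclideanLin_surjective hPinv) (pow_pos (hpos _) 2) hlo2 hhi2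
    (norm_ne_zero_iff.1 (by simp [hv])) (by simp [hv, mulE]) hw' hρ
end

section
/- Let A ∈ ℂ^{m×n} have full column rank with singular values σ₁ ≥ … ≥ σ_n > 0 satisfying σ_{n−1} > σ_n, and let v_min be a unit right singular vector of A associated with σ_n. Let v ∈ ℂⁿ be a unit vector with ‖Av‖ < σ_{n−1}. Writing sin²∠(v, v_min) := 1 − |⟨v, v_min⟩|² and tan²∠(v, v_min) := sin²∠(v, v_min)/(1 − sin²∠(v, v_min)), one has tan²∠(v, v_min) ≤ (‖Av‖² − σ_n²)/(σ_{n−1}² − ‖Av‖²). -/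
/-!
Write `v = ⟨u, v⟩ u + w` with `u = v_min` and `w ⊥ u`. As `u` is an eigenvector of `AᴴA`, the
images `Au` and `Aw` are again orthogonal, so `‖Av‖² = σₙ² |⟨u, v⟩|² + ‖Aw‖²`, and
`‖Aw‖ ≥ σₙ₋₁ ‖w‖` on the orthogonal complement of `u`. With `c = |⟨u, v⟩|²` this reads
`σₙ² c + σₙ₋₁² (1 - c) ≤ ‖Av‖²`. Since `‖Av‖ < σₙ₋₁` it forces `c > 0`, and it rearranges to the
bound on `(1 - c) / c`.
-/

open Matrix

section LinearMap

variable {𝕜 E F : Type*} [RCLike 𝕜] [NormedAddCommGroup E] [InnerProductSpace 𝕜 E]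
  [NormedAddCommGroup F] [InnerProductSpace 𝕜 F] {T : E →ₗ[𝕜] F}

/-- `u` is a right singular vector of `T` for the singular value `s`, or zero. This is the weak form
of `T* T u = s² u`, so that no adjoint is needed and the spaces may be incomplete. -/
def IsRightSingularVector (T : E →ₗ[𝕜] F) (s : ℝ) (u : E) : Prop :=
  ∀ x, inner 𝕜 (T u) (T x) = (s : 𝕜) ^ 2 * inner 𝕜 u x

namespace IsRightSingularVector

lemma inner_map_right {s : ℝ} {u : E} (hu : IsRightSingularVector T s u) (x : E) :
    inner 𝕜 (T x) (T u) = (s : 𝕜) ^ 2 * inner 𝕜 x u := by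
  rw [← inner_conj_symm, hu x, map_mul, map_pow, RCLike.conj_ofReal, inner_conj_symm]

lemma norm_map_sq {s : ℝ} {u : E} (hu : IsRightSingularVector T s u) :
    ‖T u‖ ^ 2 = s ^ 2 * ‖u‖ ^ 2 := by
  have h := hu u
  rw [inner_self_eq_norm_sq_to_K, inner_self_eq_norm_sq_to_K] at h
  exact_mod_cast h

lemma smul {s : ℝ} {u : E} (hu : IsRightSingularVector T s u) (c : 𝕜) :
    IsRightSingularVector T s (c • u) := fun x ↦ by
  rw [map_smul, inner_smul_left, inner_smul_left, hu x, mul_left_comm]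

lemma inner_eq_zero_of_sq_ne {s t : ℝ} {u w : E} (hu : IsRightSingularVector T s u)
    (hw : IsRightSingularVector T t w) (hst : s ^ 2 ≠ t ^ 2) : inner 𝕜 u w = 0 := by
  have h : (s : 𝕜) ^ 2 * inner 𝕜 u w = (t : 𝕜) ^ 2 * inner 𝕜 u w :=
    (hu w).symm.trans (hw.inner_map_right u)
  by_contra h0
  exact hst (by exact_mod_cast mul_right_cancel₀ h0 h)

lemma norm_map_add_sq {s : ℝ} {u w : E} (hu : IsRightSingularVector T s u)
    (huw : inner 𝕜 u w = 0) : ‖T (u + w)‖ ^ 2 = s ^ 2 * ‖u‖ ^ 2 + ‖T w‖ ^ 2 := by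
  have h : inner 𝕜 (T u) (T w) = 0 := by rw [hu w, huw, mul_zero]
  rw [map_add, ← hu.norm_map_sq]
  simpa only [sq] using norm_add_sq_eq_norm_sq_add_norm_sq_of_inner_eq_zero _ _ h

lemma le_norm_map_sq {s p : ℝ} {u : E} (hu : IsRightSingularVector T s u) (hu1 : ‖u‖ = 1)
    (hp : 0 ≤ p) (hgap : ∀ x, inner 𝕜 u x = 0 → p * ‖x‖ ≤ ‖T x‖) (v : E) :
    s ^ 2 * ‖inner 𝕜 v u‖ ^ 2 + p ^ 2 * (‖v‖ ^ 2 - ‖inner 𝕜 v u‖ ^ 2) ≤ ‖T v‖ ^ 2 := by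
  set a : E := inner 𝕜 u v • u with ha
  set w : E := v - a with hw
  have huw : inner 𝕜 u w = 0 := by
    rw [hw, ha, inner_sub_right, inner_smul_right, inner_self_eq_norm_sq_to_K, hu1]
    simp
  have haw : inner 𝕜 a w = 0 := by rw [ha, inner_smul_left, huw, mul_zero]
  have hv : a + w = v := add_sub_cancel a v
  have hnorm_a : ‖a‖ = ‖inner 𝕜 v u‖ := by rw [ha, norm_smul, hu1, mul_one, norm_inner_symm]
  have hnorm_w : ‖w‖ ^ 2 = ‖v‖ ^ 2 - ‖inner 𝕜 v u‖ ^ 2 := by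
    have h := norm_add_sq_eq_norm_sq_add_norm_sq_of_inner_eq_zero _ _ haw
    rw [hv, hnorm_a] at h
    linarith
  calc s ^ 2 * ‖inner 𝕜 v u‖ ^ 2 + p ^ 2 * (‖v‖ ^ 2 - ‖inner 𝕜 v u‖ ^ 2)
      = s ^ 2 * ‖a‖ ^ 2 + (p * ‖w‖) ^ 2 := by rw [hnorm_a, ← hnorm_w, mul_pow]
    _ ≤ s ^ 2 * ‖a‖ ^ 2 + ‖T w‖ ^ 2 := by gcongr; exact hgap w huw
    _ = ‖T v‖ ^ 2 := by rw [← (hu.smul _).norm_map_add_sq haw, hv]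

end IsRightSingularVector

section SingularBasis

variable {ι : Type*} [Fintype ι] {b : OrthonormalBasis ι 𝕜 E} {σ : ι → ℝ}

lemma norm_map_sq_eq_sum_of_singular_basis (hb : ∀ i, IsRightSingularVector T (σ i) (b i))
    (x : E) : ‖T x‖ ^ 2 = ∑ i, σ i ^ 2 * ‖inner 𝕜 (b i) x‖ ^ 2 := by
  have h : (‖T x‖ : 𝕜) ^ 2 = ∑ i, (σ i : 𝕜) ^ 2 * (‖inner 𝕜 (b i) x‖ : 𝕜) ^ 2 := by
    calc (‖T x‖ : 𝕜) ^ 2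
        = inner 𝕜 (T (∑ i, inner 𝕜 (b i) x • b i)) (T x) := by
          rw [b.sum_repr', inner_self_eq_norm_sq_to_K]
      _ = ∑ i, (σ i : 𝕜) ^ 2 * (‖inner 𝕜 (b i) x‖ : 𝕜) ^ 2 := by
          rw [map_sum, sum_inner]
          refine Finset.sum_congr rfl fun i _ ↦ ?_
          rw [((hb i).smul _) x, inner_smul_left, RCLike.conj_mul]
  exact_mod_cast h

lemma mul_norm_le_norm_map_of_singular_basis (hb : ∀ i, IsRightSingularVector T (σ i) (b i))
    {p : ℝ} (hp : 0 ≤ p) {x : E} (hx : ∀ i, inner 𝕜 (b i) x ≠ 0 → p ≤ σ i) :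
    p * ‖x‖ ≤ ‖T x‖ := by
  refine le_of_sq_le_sq ?_ (norm_nonneg _)
  rw [mul_pow, ← b.sum_sq_norm_inner_right x, norm_map_sq_eq_sum_of_singular_basis hb,
    Finset.mul_sum]
  refine Finset.sum_le_sum fun i _ ↦ ?_
  obtain h | h := eq_or_ne (inner 𝕜 (b i) x) 0
  · simp [h]
  · gcongr
    exact hx i h

lemma mul_norm_le_norm_map_of_inner_eq_zero (hb : ∀ i, IsRightSingularVector T (σ i) (b i))
    {p : ℝ} {k : ι} (hp : 0 ≤ p) (hσk : 0 ≤ σ k) (hσ : ∀ i, i ≠ k → p ≤ σ i) {u x : E}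
    (hu0 : u ≠ 0) (hu : IsRightSingularVector T (σ k) u) (hux : inner 𝕜 u x = 0) :
    p * ‖x‖ ≤ ‖T x‖ := by
  refine mul_norm_le_norm_map_of_singular_basis hb hp fun i hi ↦ ?_
  obtain hik | rfl := ne_or_eq i k
  · exact hσ i hik
  -- If `σ i < p`, the multiplicity of `σ i` is one, so `u` is parallel to `b i` and `⟪b i, x⟫ = 0`.
  by_contra! hlt
  have hperp : ∀ j, j ≠ i → inner 𝕜 (b j) u = 0 := fun j hj ↦
    (hb j).inner_eq_zero_of_sq_ne hu (pow_lt_pow_left₀ (hlt.trans_le (hσ j hj)) hσk two_ne_zero).ne'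
  have hparallel : u = inner 𝕜 (b i) u • b i :=
    calc u = ∑ j, inner 𝕜 (b j) u • b j := (b.sum_repr' u).symm
      _ = inner 𝕜 (b i) u • b i :=
        Fintype.sum_eq_single i fun j hj ↦ by rw [hperp j hj, zero_smul]
  rw [hparallel, inner_smul_left, mul_eq_zero, map_eq_zero] at hux
  exact hu0 (by rw [hparallel, hux.resolve_right hi, zero_smul])

end SingularBasis

/-- For a matrix, `s = σₙ`, and by the min-max principle `p = σₙ₋₁` is the best constant. -/
theorem tan_angle_energy_bound_general {s p : ℝ} {u v : E} (hu1 : ‖u‖ = 1)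
    (hu : IsRightSingularVector T s u) (hgap : ∀ x, inner 𝕜 u x = 0 → p * ‖x‖ ≤ ‖T x‖)
    (hv1 : ‖v‖ = 1) (hv : ‖T v‖ < p) :
    (1 - ‖inner 𝕜 v u‖ ^ 2) / ‖inner 𝕜 v u‖ ^ 2 ≤
      (‖T v‖ ^ 2 - s ^ 2) / (p ^ 2 - ‖T v‖ ^ 2) := by
  have henergy := hu.le_norm_map_sq hu1 ((norm_nonneg _).trans hv.le) hgap v
  rw [hv1, one_pow] at henergy
  have hden : ‖T v‖ ^ 2 < p ^ 2 := pow_lt_pow_left₀ hv (norm_nonneg _) two_ne_zero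
  -- At a right angle the left-hand side would be the junk value `1 / 0 = 0`.
  have hcos : inner 𝕜 v u ≠ 0 := by
    intro h
    rw [h, norm_zero] at henergy
    linarith
  rw [div_le_div_iff₀ (by positivity) (sub_pos.2 hden)]
  linarith

end LinearMap

section Matrix

variable {m n : ℕ} {A : Matrix (Fin m) (Fin n) ℂ}

lemma isRightSingularVector_toEuclideanLin_iff {s : ℝ} {u : EuclideanSpace ℂ (Fin n)} :
    IsRightSingularVector (toEuclideanLin A) s u ↔
      mulE (Aᴴ * A) u = ((s ^ 2 : ℝ) : ℂ) • u := by
  have hgram : mulE (Aᴴ * A) u = (toEuclideanLin A).adjoint (toEuclideanLin A u) := by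
    rw [← toEuclideanLin_conjTranspose_eq_adjoint]
    ext i
    simp [mulE, toLpLin_apply, mulVec_mulVec]
  rw [ext_iff_inner_right ℂ, hgram]
  refine forall_congr' fun x ↦ ?_
  rw [LinearMap.adjoint_inner_left, inner_smul_left, Complex.conj_ofReal, Complex.ofReal_pow]
  rfl

namespace HasSingularValues

variable {σ : Fin n → ℝ}

lemma exists_orthonormalBasis_s7 (hσ : HasSingularValues A σ) :
    ∃ b : OrthonormalBasis (Fin n) ℂ (EuclideanSpace ℂ (Fin n)),
      ∀ i, IsRightSingularVector (toEuclideanLin A) (σ i) (b i) := by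
  obtain ⟨-, -, B, hB, hBσ⟩ := hσ
  have hspan : ⊤ ≤ Submodule.span ℂ (Set.range B) :=
    (hB.linearIndependent.span_eq_top_of_card_eq_finrank' (by simp)).ge
  refine ⟨OrthonormalBasis.mk hB hspan, fun i ↦ isRightSingularVector_toEuclideanLin_iff.2 ?_⟩
  rw [OrthonormalBasis.coe_mk, hBσ]

lemma mul_norm_le_norm_mulE_of_inner_eq_zero (hσ : HasSingularValues A σ) {j k : Fin n}
    (hjk : ∀ i, i ≠ k → i ≤ j) {u x : EuclideanSpace ℂ (Fin n)} (hu0 : u ≠ 0)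
    (hu : mulE (Aᴴ * A) u = ((σ k ^ 2 : ℝ) : ℂ) • u) (hux : inner ℂ u x = 0) :
    σ j * ‖x‖ ≤ ‖mulE A x‖ := by
  obtain ⟨b, hb⟩ := hσ.exists_orthonormalBasis_s7
  exact mul_norm_le_norm_map_of_inner_eq_zero hb (hσ.2.1 j) (hσ.2.1 k)
    (fun i hi ↦ hσ.1 (hjk i hi)) hu0 (isRightSingularVector_toEuclideanLin_iff.2 hu) hux

end HasSingularValues

end Matrix

/-- under the setting of Statement 6, if additionally `‖Av‖ < σₙ₋₁`, then
`tan²∠(v, v_min) ≤ (‖Av‖² − σₙ²)/(σₙ₋₁² − ‖Av‖²)`, where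
`tan²∠(v,v_min) = sin²∠(v,v_min)/(1 − sin²∠(v,v_min))` and
`sin²∠(v,v_min) = 1 − |⟨v,v_min⟩|²`. -/
theorem tan_angle_energy_bound
    {m n : ℕ} (hn : 2 ≤ n)
    (A : Matrix (Fin m) (Fin n) ℂ)
    (hrank : Function.Injective (mulE A))
    (σ : Fin n → ℝ) (hσ : HasSingularValues A σ) (hpos : ∀ i, 0 < σ i)
    (hgap : σ ⟨n - 1, by omega⟩ < σ ⟨n - 2, by omega⟩)
    (vmin : EuclideanSpace ℂ (Fin n)) (hvmin1 : ‖vmin‖ = 1)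
    (hvmin2 : mulE (Aᴴ * A) vmin = ((σ ⟨n - 1, by omega⟩ ^ 2 : ℝ) : ℂ) • vmin)
    (v : EuclideanSpace ℂ (Fin n)) (hv : ‖v‖ = 1)
    (hbelow : ‖mulE A v‖ < σ ⟨n - 2, by omega⟩)
    (s2 t2 : ℝ) (hs2 : s2 = 1 - ‖@inner ℂ _ _ v vmin‖ ^ 2)
    (ht2 : t2 = s2 / (1 - s2)) :
    t2 ≤ (‖mulE A v‖ ^ 2 - σ ⟨n - 1, by omega⟩ ^ 2) /
      (σ ⟨n - 2, by omega⟩ ^ 2 - ‖mulE A v‖ ^ 2) := by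
  rw [ht2, hs2, sub_sub_cancel]
  exact tan_angle_energy_bound_general hvmin1 (isRightSingularVector_toEuclideanLin_iff.2 hvmin2)
    (fun _ ↦ hσ.mul_norm_le_norm_mulE_of_inner_eq_zero (by grind)
      (norm_ne_zero_iff.1 (hvmin1.trans_ne one_ne_zero)) hvmin2) hv hbelow
end

section
/- Let σ_n, σ_{n−1} be reals with 0 < σ_n < σ_{n−1}, set gap := (σ_{n−1}² − σ_n²)/σ_n², and let η ∈ (0,1) satisfy η < gap/(2+gap). Suppose ρ ∈ ℝ satisfies σ_n² ≤ ρ² ≤ ((1+η)/(1−η))·σ_n². Then (ρ² − σ_n²)/(σ_{n−1}² − ρ²) ≤ 2η/((1−η)·gap − 2η), and the denominator (1−η)·gap − 2η is strictly positive. (Applied with ρ = ‖A v₀‖, this bounds the initial error ratio of the sketch-and-solve initialization.) -/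
/-!
For `s ≤ t` the ratio `(r - s) / (t - r)` increases with `r` up to its pole at `r = t`, so it is
largest at the greatest admissible value `r = (1 + η) / (1 - η) * s`. With `t = (1 + g) * s` its
value there is exactly `2 * η / ((1 - η) * g - 2 * η)`, and the distortion–gap condition says that
this point lies below the pole.
-/

section

variable {K : Type*} [Field K]

theorem distortion_mul_sub_div_one_add_mul_sub {s g η : K} (hs : s ≠ 0) (hη : 1 - η ≠ 0) :
    ((1 + η) / (1 - η) * s - s) / ((1 + g) * s - (1 + η) / (1 - η) * s) =
      2 * η / ((1 - η) * g - 2 * η) := by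
  have hnum : (1 + η) / (1 - η) * s - s = 2 * η * (s / (1 - η)) := by
    field_simp
    ring
  have hden : (1 + g) * s - (1 + η) / (1 - η) * s =
      ((1 - η) * g - 2 * η) * (s / (1 - η)) := by
    field_simp
    ring
  rw [hnum, hden, mul_div_mul_right _ _ (div_ne_zero hs hη)]

variable [LinearOrder K] [IsStrictOrderedRing K]

theorem monotoneOn_sub_div_sub {s t : K} (hst : s ≤ t) :
    MonotoneOn (fun r ↦ (r - s) / (t - r)) (Set.Iio t) := by
  intro r hr r' hr' hrr'
  have hcross : (r' - s) * (t - r) - (r - s) * (t - r') = (r' - r) * (t - s) := by ring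
  rw [div_le_div_iff₀ (sub_pos.2 hr) (sub_pos.2 hr'), ← sub_nonneg, hcross]
  exact mul_nonneg (sub_nonneg.2 hrr') (sub_nonneg.2 hst)

theorem lt_div_two_add_iff {g η : K} (hg : 0 < 2 + g) :
    η < g / (2 + g) ↔ 0 < (1 - η) * g - 2 * η := by
  have hsub : (1 - η) * g - 2 * η = g - η * (2 + g) := by ring
  rw [lt_div_iff₀ hg, hsub, sub_pos]

theorem distortion_mul_lt_one_add_mul_iff {s g η : K} (hs : 0 < s) (hη : η < 1) :
    (1 + η) / (1 - η) * s < (1 + g) * s ↔ 0 < (1 - η) * g - 2 * η := by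
  have hsub : (1 - η) * g - 2 * η = (1 + g) * (1 - η) - (1 + η) := by ring
  rw [mul_lt_mul_iff_left₀ hs, div_lt_iff₀ (sub_pos.2 hη), hsub, sub_pos]

theorem initial_error_ratio_bound_general {s t gap η r : K} (hs : 0 < s) (hst : s ≤ t)
    (hgap : gap = (t - s) / s) (hηgap : η < gap / (2 + gap))
    (hr : r ≤ (1 + η) / (1 - η) * s) :
    0 < (1 - η) * gap - 2 * η ∧ (r - s) / (t - r) ≤ 2 * η / ((1 - η) * gap - 2 * η) := by
  have ht : t = (1 + gap) * s := by
    rw [hgap]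
    field_simp
    ring
  have hgap0 : 0 ≤ gap := hgap ▸ div_nonneg (sub_nonneg.2 hst) hs.le
  have hgap2 : 0 < 2 + gap := by positivity
  have hη : η < 1 := hηgap.trans ((div_lt_one hgap2).2 (lt_add_of_pos_left gap two_pos))
  have hD : 0 < (1 - η) * gap - 2 * η := (lt_div_two_add_iff hgap2).1 hηgap
  have hpole : (1 + η) / (1 - η) * s < t := ht ▸ (distortion_mul_lt_one_add_mul_iff hs hη).2 hD
  refine ⟨hD, ?_⟩
  calc (r - s) / (t - r)
      ≤ ((1 + η) / (1 - η) * s - s) / (t - (1 + η) / (1 - η) * s) :=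
        monotoneOn_sub_div_sub hst (hr.trans_lt hpole) hpole hr
    _ = 2 * η / ((1 - η) * gap - 2 * η) := by
        rw [ht, distortion_mul_sub_div_one_add_mul_sub hs.ne' (sub_pos.2 hη).ne']

end

/-- with `0 < σₙ < σₙ₋₁`, `gap := (σₙ₋₁² − σₙ²)/σₙ²`, `η ∈ (0,1)` with
`η < gap/(2+gap)`, and `ρ` with `σₙ² ≤ ρ² ≤ ((1+η)/(1−η))·σₙ²`: the denominator
`(1−η)·gap − 2η` is strictly positive and
`(ρ² − σₙ²)/(σₙ₋₁² − ρ²) ≤ 2η/((1−η)·gap − 2η)`. -/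
theorem initial_error_ratio_bound
    (σn σn1 : ℝ) (h0 : 0 < σn) (h1 : σn < σn1)
    (gap : ℝ) (hgap : gap = (σn1 ^ 2 - σn ^ 2) / σn ^ 2)
    (η : ℝ) (hη0 : 0 < η) (hη1 : η < 1) (hηgap : η < gap / (2 + gap))
    (ρ : ℝ) (hρ1 : σn ^ 2 ≤ ρ ^ 2) (hρ2 : ρ ^ 2 ≤ (1 + η) / (1 - η) * σn ^ 2) :
    0 < (1 - η) * gap - 2 * η ∧
      (ρ ^ 2 - σn ^ 2) / (σn1 ^ 2 - ρ ^ 2) ≤ 2 * η / ((1 - η) * gap - 2 * η) :=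
  initial_error_ratio_bound_general (pow_pos h0 2) (pow_le_pow_left₀ h0.le h1.le 2) hgap hηgap hρ2
end
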